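/- arXiv:1904.07565 — 2 statements merged into one kernel-verified Lean document; each statement's English description precedes it below -/
import Mathlib

section
/- Let a,b,c,x,y be distinct, let f be a polymatroid on {a,b,c}, and let f_x, f_y be polymatroids on {a,b,c,x} and {a,b,c,y} extending f. Then f_x and f_y have an amalgam if and only if the following inequality holds for every permutation of the roles of a,b,c, for the exchange of (x, f_x) with (y, f_y), and for each of the eight choices in the three braced alternatives: f_x(a,x|c) + f_x(a,b|x) + f_y(a,b|y) + f_y(c,y) + {f_x(b,x|ac) or f_y(b,y|ac)} + {f_x(c,x|ab) or f_y(c,y|ab)} + 2·{f_x(x|abc) or f_y(y|abc)} ≥ f(a,b). -/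
open Finset

noncomputable section

variable {α : Type*} [DecidableEq α]

/-- `f` is a polymatroid with ground set `M`: it vanishes on `∅` and is
non-negative, monotone and submodular on subsets of `M`. -/
def IsPolymatroid (M : Finset α) (f : Finset α → ℝ) : Prop :=
  f ∅ = 0 ∧
  (∀ A, A ⊆ M → 0 ≤ f A) ∧
  (∀ A B, A ⊆ B → B ⊆ M → f A ≤ f B) ∧
  (∀ A B, A ⊆ M → B ⊆ M → f (A ∪ B) + f (A ∩ B) ≤ f A + f B)

/-- `pmi f I J K` is the expression `f(I,J|K) = f(I∪K)+f(J∪K)−f(I∪J∪K)−f(K)`. -/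
def pmi (f : Finset α → ℝ) (I J K : Finset α) : ℝ :=
  f (I ∪ K) + f (J ∪ K) - f (I ∪ J ∪ K) - f K

/-- `pcd f I K` is the expression `f(I|K) = f(I∪K) − f(K)`. -/
def pcd (f : Finset α → ℝ) (I K : Finset α) : ℝ := f (I ∪ K) - f K

/-- Polymatroids `fX` on `M ∪ X` and `fY` on `M ∪ Y` have an amalgam: a common
polymatroid extension on `M ∪ X ∪ Y`. -/
def HaveAmalgam (M X Y : Finset α) (fX fY : Finset α → ℝ) : Prop :=
  ∃ g : Finset α → ℝ, IsPolymatroid (M ∪ X ∪ Y) g ∧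
    (∀ A, A ⊆ M ∪ X → g A = fX A) ∧ (∀ A, A ⊆ M ∪ Y → g A = fY A)

/-- Polymatroids `fX` on `M ∪ X` and `fY` on `M ∪ Y` are adhesive: they have a
modular common extension, i.e. one with `g(X,Y|M) = 0`. -/
def Adhesive (M X Y : Finset α) (fX fY : Finset α → ℝ) : Prop :=
  ∃ g : Finset α → ℝ, IsPolymatroid (M ∪ X ∪ Y) g ∧
    (∀ A, A ⊆ M ∪ X → g A = fX A) ∧ (∀ A, A ⊆ M ∪ Y → g A = fY A) ∧
    pmi g X Y M = 0

/-- The left-hand side of inequality (1) of Theorem 3, with the three braced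
alternatives selected by booleans `s1, s2, s3`. -/
def amLHS (fx fy : Finset α → ℝ) (x y a b c : α) (s1 s2 s3 : Bool) : ℝ :=
  pmi fx {a} {x} {c} + pmi fx {a} {b} {x} + pmi fy {a} {b} {y} + pmi fy {c} {y} ∅ +
  (if s1 then pmi fx {b} {x} {a, c} else pmi fy {b} {y} {a, c}) +
  (if s2 then pmi fx {c} {x} {a, b} else pmi fy {c} {y} {a, b}) +
  2 * (if s3 then pcd fx {x} {a, b, c} else pcd fy {y} {a, b, c})

/-!
An amalgam `g` of `f_x` and `f_y` is determined by its values `h(A) = g(Axy)`, `A ⊆ M`. Conversely,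
`h` together with `f_x` and `f_y` forms an amalgam as soon as `h` is submodular and largest at `M`,
and satisfies `h(A) ≤ U(A) := f_x(Ax) + f_y(Ay) - f(A)`,
`h(i | A) ≤ D(i | A) := min {f_x(i | Ax), f_y(i | Ay)}` and `h(M) ≥ T := max {f_x(Mx), f_y(My)}`.

On three points such an `h` can be chosen greedily: `T` at `M`, the least possible values on pairs,
then the largest possible ones on singletons and the least possible one at `∅`. This works exactly
when `2T ≤ U(a) + U(b) + D(c) + D(a | c) + D(b | ac) + D(c | ab)` for all orders of the points.
Expanding the minima and the maximum turns this into inequality (1), since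
`f_x(i, x | A) = U(A) - U(Ai) + f_y(i | Ay)` and `f_x(x | M) = U(M) - f_y(My)`.
-/

theorem pcd_singleton (f : Finset α → ℝ) (i : α) (A : Finset α) :
    pcd f {i} A = f (insert i A) - f A := rfl

theorem pcd_add_pcd_insert_comm (f : Finset α → ℝ) (i j : α) (A : Finset α) :
    pcd f {i} A + pcd f {j} (insert i A) = pcd f {j} A + pcd f {i} (insert j A) := by
  simp only [pcd_singleton, insert_comm i j A]
  ring

theorem pcd_insert_le_comm {f : Finset α → ℝ} {i j : α} {A : Finset α} :
    pcd f {i} (insert j A) ≤ pcd f {i} A ↔ pcd f {j} (insert i A) ≤ pcd f {j} A := by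
  have := pcd_add_pcd_insert_comm f i j A
  constructor <;> intro h <;> linarith

theorem pmi_congr {f g : Finset α → ℝ} {I J K : Finset α} (h : ∀ A ⊆ I ∪ J ∪ K, f A = g A) :
    pmi f I J K = pmi g I J K := by
  rw [pmi, pmi, h _ (by grind), h _ (by grind), h _ Subset.rfl, h K subset_union_right]

section LocalSubmodularity

variable {N A B : Finset α} {f : Finset α → ℝ}

theorem le_of_subset_of_le_insert
    (hf : ∀ A ⊆ N, ∀ i ∈ N, i ∉ A → f A ≤ f (insert i A)) (hAB : A ⊆ B) (hB : B ⊆ N) :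
    f A ≤ f B := by
  suffices ∀ D ⊆ N, f A ≤ f (D ∪ A) by simpa only [union_eq_left.mpr hAB] using this B hB
  intro D hD
  induction D using Finset.induction_on with
  | empty => rw [empty_union]
  | insert i D _ ih =>
    obtain ⟨hi, hD⟩ := insert_subset_iff.mp hD
    rw [insert_union]
    by_cases hiDA : i ∈ D ∪ A
    · simpa only [insert_eq_of_mem hiDA] using ih hD
    · exact (ih hD).trans (hf _ (union_subset hD (hAB.trans hB)) i hi hiDA)

theorem pcd_le_pcd_of_local {i : α}
    (hf : ∀ A ⊆ N, ∀ i ∈ N, ∀ j ∈ N, i ∉ A → j ∉ A → i ≠ j →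
      pcd f {i} (insert j A) ≤ pcd f {i} A)
    (hAB : A ⊆ B) (hB : B ⊆ N) (hi : i ∈ N) (hiB : i ∉ B) : pcd f {i} B ≤ pcd f {i} A := by
  refine neg_le_neg_iff.mp <| le_of_subset_of_le_insert (N := N.erase i)
    (f := fun C ↦ -pcd f {i} C) ?_ hAB (subset_erase.mpr ⟨hB, hiB⟩)
  intro C hC j hj hjC
  obtain ⟨hC, hiC⟩ := subset_erase.mp hC
  obtain ⟨hji, hj⟩ := mem_erase.mp hj
  exact neg_le_neg (hf C hC i hi j hj hiC hjC hji.symm)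

theorem isPolymatroid_of_local (hempty : f ∅ = 0) (htop : ∀ i ∈ N, f (N.erase i) ≤ f N)
    (hf : ∀ A ⊆ N, ∀ i ∈ N, ∀ j ∈ N, i ∉ A → j ∉ A → i ≠ j →
      pcd f {i} (insert j A) ≤ pcd f {i} A) :
    IsPolymatroid N f := by
  have insert_mono : ∀ A ⊆ N, ∀ i ∈ N, i ∉ A → f A ≤ f (insert i A) := by
    intro A hA i hi hiA
    have h := pcd_le_pcd_of_local hf (subset_erase.mpr ⟨hA, hiA⟩) (erase_subset i N) hi
      (notMem_erase i N)
    simp only [pcd_singleton, insert_erase hi] at h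
    linarith [htop i hi]
  have mono : ∀ A B, A ⊆ B → B ⊆ N → f A ≤ f B := fun A B ↦
    le_of_subset_of_le_insert insert_mono
  refine ⟨hempty, fun A hA ↦ hempty ▸ mono ∅ A (empty_subset A) hA, mono, fun A B hA hB ↦ ?_⟩
  have key : f (A ∩ B) - f (A ∪ A ∩ B) ≤ f B - f (A ∪ B) := by
    refine le_of_subset_of_le_insert (f := fun C ↦ f C - f (A ∪ C)) ?_ inter_subset_right hB
    intro C hC i hi hiC
    rw [union_insert]
    by_cases hiA : i ∈ A
    · simpa only [insert_eq_of_mem (mem_union_left C hiA), sub_le_sub_iff_right] using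
        insert_mono C hC i hi hiC
    · have h := pcd_le_pcd_of_local hf (subset_union_right (s₁ := A) (s₂ := C))
        (union_subset hA hC) hi (notMem_union.mpr ⟨hiA, hiC⟩)
      simp only [pcd_singleton] at h
      linarith
  rw [union_eq_left.mpr inter_subset_left] at key
  linarith

end LocalSubmodularity

namespace IsPolymatroid

variable {N A B I : Finset α} {f : Finset α → ℝ}

theorem mono (hf : IsPolymatroid N f) (hAB : A ⊆ B) (hB : B ⊆ N) : f A ≤ f B :=
  hf.2.2.1 A B hAB hB

theorem pcd_anti (hf : IsPolymatroid N f) (hI : I ⊆ N) (hAB : A ⊆ B) (hB : B ⊆ N) :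
    pcd f I B ≤ pcd f I A := by
  have hsub := hf.2.2.2 (I ∪ A) B (union_subset hI (hAB.trans hB)) hB
  have hmono : f A ≤ f ((I ∪ A) ∩ B) :=
    hf.mono (subset_inter subset_union_right hAB) (inter_subset_right.trans hB)
  rw [union_assoc, union_eq_right.mpr hAB] at hsub
  unfold pcd
  linarith

theorem pcd_nonneg (hf : IsPolymatroid N f) (hI : I ⊆ N) (hA : A ⊆ N) : 0 ≤ pcd f I A :=
  sub_nonneg.mpr (hf.mono subset_union_right (union_subset hI hA))

end IsPolymatroid

/-- The bound `f_x(Ax) + f_y(Ay) - f(A)` that `g(x, y | A) ≥ 0` imposes on the value `g(Axy)` of an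
amalgam `g`. The common restriction `f` is read off `fx`. -/
def jointBound (fx fy : Finset α → ℝ) (x y : α) (A : Finset α) : ℝ :=
  fx (insert x A) + fy (insert y A) - fx A

/-- The bound `min {f_x(i | Ax), f_y(i | Ay)}` that submodularity imposes on the increment
`g(i | Axy)` of an amalgam `g`. -/
def incrBound (fx fy : Finset α → ℝ) (x y : α) (A : Finset α) (i : α) : ℝ :=
  min (pcd fx {i} (insert x A)) (pcd fy {i} (insert y A))

/-- The lower bound `max {f_x(Mx), f_y(My)}` that monotonicity imposes on the value `g(Mxy)` of an
amalgam `g`. -/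
def topBound (fx fy : Finset α → ℝ) (x y : α) (M : Finset α) : ℝ :=
  max (fx (insert x M)) (fy (insert y M))

/-- `h` satisfies the constraints that characterise the map `A ↦ g(Axy)`, `A ⊆ M`, for an amalgam
`g` of one-point extensions of a polymatroid on `M`: the values are bounded by `U`, the increments
by `D`, and the top value is at least `T`. -/
structure IsAmalgamProfile (M : Finset α) (U : Finset α → ℝ) (D : Finset α → α → ℝ) (T : ℝ)
    (h : Finset α → ℝ) : Prop where
  le_upper : ∀ A ⊆ M, h A ≤ U A
  pcd_le : ∀ A ⊆ M, ∀ i ∈ M, i ∉ A → pcd h {i} A ≤ D A i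
  pcd_anti : ∀ A ⊆ M, ∀ i ∈ M, ∀ j ∈ M, i ∉ A → j ∉ A → i ≠ j →
    pcd h {i} (insert j A) ≤ pcd h {i} A
  le_top : T ≤ h M
  erase_le_top : ∀ i ∈ M, h (M.erase i) ≤ h M

theorem HaveAmalgam.exists_isAmalgamProfile {M : Finset α} {x y : α} {fx fy : Finset α → ℝ}
    (hg : HaveAmalgam M {x} {y} fx fy) :
    ∃ h, IsAmalgamProfile M (jointBound fx fy x y) (incrBound fx fy x y) (topBound fx fy x y M)
      h := by
  obtain ⟨g, hg, hgx, hgy⟩ := hg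
  have hMxy : M ∪ {x} ∪ {y} = insert x (insert y M) := by grind
  have hMx : ∀ A ⊆ M, g (insert x A) = fx (insert x A) := fun A hA ↦ hgx _ (by grind)
  have hMy : ∀ A ⊆ M, g (insert y A) = fy (insert y A) := fun A hA ↦ hgy _ (by grind)
  rw [hMxy] at hg
  refine ⟨fun A ↦ g (insert x (insert y A)), fun A hA ↦ ?_, fun A hA i hi _ ↦ le_min ?_ ?_,
    fun A hA i hi j hj _ _ _ ↦ ?_, max_le ?_ ?_, fun i _ ↦ ?_⟩
  · have h := hg.pcd_anti (I := {x}) (A := A) (B := insert y A) (by grind) (by grind) (by grind)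
    simp only [pcd_singleton] at h
    rw [hMx A hA, hMy A hA, hgx A (by grind)] at h
    rw [jointBound]
    linarith
  · have h := hg.pcd_anti (I := {i}) (A := insert x A) (B := insert x (insert y A))
      (by grind) (by grind) (by grind)
    simpa only [pcd_singleton, insert_comm i, hMx _ hA, hMx _ (insert_subset hi hA)] using h
  · have h := hg.pcd_anti (I := {i}) (A := insert y A) (B := insert x (insert y A))
      (by grind) (by grind) (by grind)
    simpa only [pcd_singleton, insert_comm i, hMy _ hA, hMy _ (insert_subset hi hA)] using h
  · have h := hg.pcd_anti (I := {i}) (A := insert x (insert y A))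
      (B := insert x (insert y (insert j A))) (by grind) (by grind) (by grind)
    simpa only [pcd_singleton, insert_comm i] using h
  · rw [← hMx M Subset.rfl]
    exact hg.mono (by grind) Subset.rfl
  · rw [← hMy M Subset.rfl]
    exact hg.mono (by grind) Subset.rfl
  · exact hg.mono (by grind) Subset.rfl

/-- `fx` and `fy` extend the same polymatroid on `M` by one new point each, `x` and `y`. -/
structure IsExtensionPair (M : Finset α) (x y : α) (fx fy : Finset α → ℝ) : Prop where
  left : IsPolymatroid (insert x M) fx
  right : IsPolymatroid (insert y M) fy
  agree : ∀ A ⊆ M, fx A = fy A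
  left_notMem : x ∉ M
  right_notMem : y ∉ M
  ne : x ≠ y

/-- The common extension of `fx` and `fy` taking the value `h A` at `Axy`. -/
def glue (x y : α) (fx fy h : Finset α → ℝ) (A : Finset α) : ℝ :=
  if x ∈ A then if y ∈ A then h ((A.erase x).erase y) else fx A else fy A

theorem glue_eq_right {x y : α} {fx fy h : Finset α → ℝ} {A : Finset α} (hx : x ∉ A) :
    glue x y fx fy h A = fy A := if_neg hx

namespace IsExtensionPair

variable {M A : Finset α} {x y i j : α} {fx fy h : Finset α → ℝ}

theorem symm (hf : IsExtensionPair M x y fx fy) : IsExtensionPair M y x fy fx :=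
  ⟨hf.right, hf.left, fun A hA ↦ (hf.agree A hA).symm, hf.right_notMem, hf.left_notMem, hf.ne.symm⟩

theorem glue_eq_left (hf : IsExtensionPair M x y fx fy) (hy : y ∉ A) (hA : A ⊆ insert x M) :
    glue x y fx fy h A = fx A := by
  by_cases hx : x ∈ A
  · rw [glue, if_pos hx, if_neg hy]
  · rw [glue, if_neg hx, hf.agree A ((subset_insert_iff_of_notMem hx).mp hA)]

theorem glue_insert_insert (hf : IsExtensionPair M x y fx fy) (hA : A ⊆ M) :
    glue x y fx fy h (insert x (insert y A)) = h A := by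
  have hx : x ∉ insert y A := by grind [hf.left_notMem, hf.ne]
  have hy : y ∉ A := fun hy ↦ hf.right_notMem (hA hy)
  rw [glue, if_pos (mem_insert_self ..), if_pos (by grind), erase_insert hx, erase_insert hy]

theorem pcd_glue_left (hf : IsExtensionPair M x y fx fy) (hi : i ∈ M) (hy : y ∉ A)
    (hA : A ⊆ insert x M) : pcd (glue x y fx fy h) {i} A = pcd fx {i} A := by
  have hyi : y ∉ insert i A := by grind [hf.right_notMem]
  simp only [pcd_singleton]
  rw [hf.glue_eq_left hyi (by grind), hf.glue_eq_left hy hA]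

theorem pcd_glue_right (hf : IsExtensionPair M x y fx fy) (hi : i ∈ M) (hx : x ∉ A) :
    pcd (glue x y fx fy h) {i} A = pcd fy {i} A := by
  have hxi : x ∉ insert i A := by grind [hf.left_notMem]
  simp only [pcd_singleton]
  rw [glue_eq_right hxi, glue_eq_right hx]

theorem pcd_glue_insert_insert (hf : IsExtensionPair M x y fx fy) (hi : i ∈ M) (hA : A ⊆ M) :
    pcd (glue x y fx fy h) {i} (insert x (insert y A)) = pcd h {i} A := by
  simp only [pcd_singleton, insert_comm i]
  rw [hf.glue_insert_insert (insert_subset hi hA), hf.glue_insert_insert hA]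

theorem pcd_glue_anti_of_mem (hf : IsExtensionPair M x y fx fy)
    (hh : IsAmalgamProfile M (jointBound fx fy x y) (incrBound fx fy x y) (topBound fx fy x y M) h)
    (hA : A ⊆ insert x (insert y M)) (hi : i ∈ M) (hj : j ∈ insert x (insert y M)) (hiA : i ∉ A)
    (hjA : j ∉ A) (hij : i ≠ j) :
    pcd (glue x y fx fy h) {i} (insert j A) ≤ pcd (glue x y fx fy h) {i} A := by
  by_cases hy : y ∉ insert j A
  · rw [hf.pcd_glue_left hi hy (by grind), hf.pcd_glue_left hi (by grind) (by grind)]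
    exact hf.left.pcd_anti (by grind) (subset_insert j A) (by grind)
  by_cases hx : x ∉ insert j A
  · rw [hf.pcd_glue_right hi hx, hf.pcd_glue_right hi (by grind)]
    exact hf.right.pcd_anti (by grind) (subset_insert j A) (by grind)
  obtain ⟨B, hB, hBA⟩ : ∃ B ⊆ M,
      A = B ∨ A = insert x B ∨ A = insert y B ∨ A = insert x (insert y B) :=
    ⟨(A.erase x).erase y, by grind, by grind⟩
  have hhB := hh.pcd_le B hB i hi (by grind)
  rcases hBA with rfl | rfl | rfl | rfl
  · grind [hf.left_notMem, hf.right_notMem, hf.ne]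
  · obtain rfl : y = j := by grind [hf.right_notMem, hf.ne]
    rw [insert_comm, hf.pcd_glue_insert_insert hi hB, hf.pcd_glue_left hi hjA (by grind)]
    exact hhB.trans (min_le_left ..)
  · obtain rfl : x = j := by grind [hf.left_notMem, hf.ne]
    rw [hf.pcd_glue_insert_insert hi hB, hf.pcd_glue_right hi hjA]
    exact hhB.trans (min_le_right ..)
  · rw [insert_comm j, insert_comm j, hf.pcd_glue_insert_insert hi (by grind),
      hf.pcd_glue_insert_insert hi hB]
    exact hh.pcd_anti B hB i hi j (by grind) (by grind) (by grind) hij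

theorem pcd_glue_insert_right_le (hf : IsExtensionPair M x y fx fy)
    (hh : IsAmalgamProfile M (jointBound fx fy x y) (incrBound fx fy x y) (topBound fx fy x y M) h)
    (hA : A ⊆ M) :
    pcd (glue x y fx fy h) {x} (insert y A) ≤ pcd (glue x y fx fy h) {x} A := by
  have hx : x ∉ insert y A := by grind [hf.left_notMem, hf.ne]
  have hy : y ∉ insert x A := by grind [hf.right_notMem, hf.ne]
  have hU := hh.le_upper A hA
  simp only [pcd_singleton]
  rw [hf.glue_insert_insert hA, glue_eq_right hx, hf.glue_eq_left hy (by grind),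
    hf.glue_eq_left (by grind) (by grind)]
  rw [jointBound] at hU
  linarith

theorem pcd_glue_anti (hf : IsExtensionPair M x y fx fy)
    (hh : IsAmalgamProfile M (jointBound fx fy x y) (incrBound fx fy x y) (topBound fx fy x y M) h)
    (hA : A ⊆ insert x (insert y M)) (hi : i ∈ insert x (insert y M))
    (hj : j ∈ insert x (insert y M)) (hiA : i ∉ A) (hjA : j ∉ A) (hij : i ≠ j) :
    pcd (glue x y fx fy h) {i} (insert j A) ≤ pcd (glue x y fx fy h) {i} A := by
  by_cases hiM : i ∈ M
  · exact hf.pcd_glue_anti_of_mem hh hA hiM hj hiA hjA hij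
  by_cases hjM : j ∈ M
  · exact pcd_insert_le_comm.mp (hf.pcd_glue_anti_of_mem hh hA hjM hi hjA hiA hij.symm)
  have hAM : A ⊆ M := by grind
  have hixy : i = x ∧ j = y ∨ i = y ∧ j = x := by grind
  rcases hixy with ⟨rfl, rfl⟩ | ⟨rfl, rfl⟩
  · exact hf.pcd_glue_insert_right_le hh hAM
  · exact pcd_insert_le_comm.mp (hf.pcd_glue_insert_right_le hh hAM)

theorem isPolymatroid_glue (hf : IsExtensionPair M x y fx fy)
    (hh : IsAmalgamProfile M (jointBound fx fy x y) (incrBound fx fy x y) (topBound fx fy x y M)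
      h) :
    IsPolymatroid (insert x (insert y M)) (glue x y fx fy h) := by
  refine isPolymatroid_of_local ?_ (fun i hi ↦ ?_) fun A hA i hi j hj hiA hjA hij ↦
    hf.pcd_glue_anti hh hA hi hj hiA hjA hij
  · rw [glue_eq_right (notMem_empty x), hf.right.1]
  rw [hf.glue_insert_insert Subset.rfl]
  have hxyM : x ∉ insert y M := by grind [hf.left_notMem, hf.ne]
  have hyxM : y ∉ insert x M := by grind [hf.right_notMem, hf.ne]
  obtain rfl | rfl | hiM : i = x ∨ i = y ∨ i ∈ M := by grind
  · rw [erase_insert hxyM, glue_eq_right hxyM]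
    exact (le_max_right ..).trans hh.le_top
  · rw [insert_comm, erase_insert hyxM, hf.glue_eq_left hyxM Subset.rfl]
    exact (le_max_left ..).trans hh.le_top
  · rw [erase_insert_of_ne (by grind), erase_insert_of_ne (by grind),
      hf.glue_insert_insert (erase_subset i M)]
    exact hh.erase_le_top i hiM

theorem haveAmalgam_iff_exists_isAmalgamProfile (hf : IsExtensionPair M x y fx fy) :
    HaveAmalgam M {x} {y} fx fy ↔ ∃ h,
      IsAmalgamProfile M (jointBound fx fy x y) (incrBound fx fy x y) (topBound fx fy x y M) h := by
  refine ⟨HaveAmalgam.exists_isAmalgamProfile, fun ⟨h, hh⟩ ↦ ⟨glue x y fx fy h, ?_, ?_, ?_⟩⟩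
  · have hMxy : M ∪ {x} ∪ {y} = insert x (insert y M) := by grind
    exact hMxy ▸ hf.isPolymatroid_glue hh
  · exact fun A hA ↦ hf.glue_eq_left (by grind [hf.right_notMem, hf.ne]) (by grind)
  · exact fun A hA ↦ glue_eq_right (by grind [hf.left_notMem, hf.ne])

end IsExtensionPair

/-- The set `M` consists of the three distinct points `i`, `j`, `k`. -/
structure IsTriple (M : Finset α) (i j k : α) : Prop where
  eq : {i, j, k} = M
  ne₁₂ : i ≠ j
  ne₁₃ : i ≠ k
  ne₂₃ : j ≠ k

theorem isTriple_iff_of_card_eq_three {M : Finset α} (hM : #M = 3) {i j k : α} :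
    IsTriple M i j k ↔ {i, j, k} = M := by
  refine ⟨IsTriple.eq, ?_⟩
  rintro rfl
  obtain ⟨hij, hik, hjk⟩ := card_triple_eq_three_iff.mp hM
  exact ⟨rfl, hij, hik, hjk⟩

namespace IsTriple

variable {M A : Finset α} {i j k : α}

theorem rotate (t : IsTriple M i j k) : IsTriple M j k i :=
  ⟨by grind [t.eq], t.ne₂₃, t.ne₁₂.symm, t.ne₁₃.symm⟩

theorem swap (t : IsTriple M i j k) : IsTriple M j i k :=
  ⟨by grind [t.eq], t.ne₁₂.symm, t.ne₂₃, t.ne₁₃⟩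

theorem swap_right (t : IsTriple M i j k) : IsTriple M i k j :=
  t.swap.rotate

theorem erase_eq (t : IsTriple M i j k) : M.erase i = {j, k} := by
  grind [t.eq, t.ne₁₂, t.ne₁₃]

theorem pair_subset (t : IsTriple M i j k) : {i, j} ⊆ M := by
  grind [t.eq]

theorem left_mem (t : IsTriple M i j k) : i ∈ M := by
  grind [t.eq]

theorem right_mem (t : IsTriple M i j k) : k ∈ M := by
  grind [t.eq]

theorem sum_erase (t : IsTriple M i j k) (g : α → ℝ) : ∑ l ∈ M.erase i, g l = g j + g k := by
  rw [t.erase_eq, sum_pair t.ne₂₃]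

end IsTriple

section CardEqThree

variable {M A : Finset α} {i j : α}

theorem exists_isTriple (hM : #M = 3) (hi : i ∈ M) : ∃ j k, IsTriple M i j k := by
  obtain ⟨j, k, _, h⟩ := card_eq_two.mp (show #(M.erase i) = 2 by rw [card_erase_of_mem hi, hM])
  refine ⟨j, k, (isTriple_iff_of_card_eq_three hM).mpr ?_⟩
  rw [← h, insert_erase hi]

theorem exists_isTriple_of_notMem (hM : #M = 3) (hA : A ⊆ M) (hi : i ∈ M) (hiA : i ∉ A) :
    ∃ j k, IsTriple M i j k ∧ (A = ∅ ∨ A = {j} ∨ A = {j, k}) := by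
  obtain ⟨j, k, t⟩ := exists_isTriple hM hi
  have hAjk : A = ∅ ∨ A = {j} ∨ A = {k} ∨ A = {j, k} := by
    have : (A : Set α) ⊆ {j, k} := by intro l; grind [t.eq]
    exact_mod_cast Set.subset_pair_iff_eq.mp this
  grind [t.swap_right]

theorem exists_isTriple_of_notMem_of_notMem (hM : #M = 3) (hA : A ⊆ M) (hi : i ∈ M) (hj : j ∈ M)
    (hiA : i ∉ A) (hjA : j ∉ A) (hij : i ≠ j) :
    ∃ k, IsTriple M i j k ∧ (A = ∅ ∨ A = {k}) := by
  obtain ⟨k, l, t, h⟩ := exists_isTriple_of_notMem hM hA hi hiA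
  grind [t.eq, t.swap_right]

end CardEqThree

/-- `U`, `D` and `T` are bounds on the values, the increments and the top value of a function on the
subsets of `M` with the regularity that the bounds coming from two polymatroids have. -/
structure IsBoundSystem (M : Finset α) (U : Finset α → ℝ) (D : Finset α → α → ℝ) (T : ℝ) :
    Prop where
  incr_nonneg : ∀ A ⊆ M, ∀ i ∈ M, 0 ≤ D A i
  incr_anti : ∀ A B, A ⊆ B → B ⊆ M → ∀ i ∈ M, D B i ≤ D A i
  upper_insert_le : ∀ A ⊆ M, ∀ i ∈ M, U (insert i A) ≤ U A + D A i
  top_le : T ≤ U M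

theorem IsExtensionPair.isBoundSystem {M : Finset α} {x y : α} {fx fy : Finset α → ℝ}
    (hf : IsExtensionPair M x y fx fy) :
    IsBoundSystem M (jointBound fx fy x y) (incrBound fx fy x y) (topBound fx fy x y M) where
  incr_nonneg A hA i hi :=
    le_min (hf.left.pcd_nonneg (by grind) (by grind)) (hf.right.pcd_nonneg (by grind) (by grind))
  incr_anti A B hAB hB i hi :=
    min_le_min (hf.left.pcd_anti (by grind) (by grind) (by grind))
      (hf.right.pcd_anti (by grind) (by grind) (by grind))
  upper_insert_le A hA i hi := by
    have hx := hf.left.pcd_anti (I := {i}) (by grind) (subset_insert x A) (by grind)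
    have hy := hf.right.pcd_anti (I := {i}) (by grind) (subset_insert y A) (by grind)
    have hA' := hf.agree A hA
    have hiA' := hf.agree (insert i A) (insert_subset hi hA)
    simp only [pcd_singleton, insert_comm i] at hx hy
    simp only [jointBound, incrBound, pcd_singleton, ← min_add_add_left, le_min_iff,
      insert_comm i]
    constructor <;> linarith
  top_le := by
    have hx := hf.left.mono (subset_insert x M) Subset.rfl
    have hy := hf.right.mono (subset_insert y M) Subset.rfl
    rw [← hf.agree M Subset.rfl] at hy
    refine max_le ?_ ?_ <;> rw [jointBound] <;> linarith

/-- The inequality on the bounds `U`, `D`, `T` that inequality (1) of the paper amounts to, in the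
roles `a = i`, `b = j`, `c = k`. -/
def TripleInequality (U : Finset α → ℝ) (D : Finset α → α → ℝ) (T : ℝ) (i j k : α) : Prop :=
  2 * T ≤ U {i} + U {j} + D ∅ k + D {k} i + D {i, k} j + D {i, j} k

section ThreePoints

variable {M : Finset α} {U : Finset α → ℝ} {D : Finset α → α → ℝ} {T : ℝ} {i j k : α}

theorem IsAmalgamProfile.tripleInequality {h : Finset α → ℝ} (hh : IsAmalgamProfile M U D T h)
    (t : IsTriple M i j k) : TripleInequality U D T i j k := by
  obtain ⟨rfl, hij, hik, hjk⟩ := t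
  have hi := hh.le_upper {i} (by grind)
  have hj := hh.le_upper {j} (by grind)
  have hk := hh.pcd_le ∅ (by grind) k (by grind) (by grind)
  have hki := hh.pcd_le {k} (by grind) i (by grind) (by grind)
  have hikj := hh.pcd_le {i, k} (by grind) j (by grind) (by grind)
  have hijk := hh.pcd_le {i, j} (by grind) k (by grind) (by grind)
  have hsub := hh.pcd_anti ∅ (by grind) i (by grind) j (by grind) (by grind) (by grind) hij
  have htop := hh.le_top
  have hM₁ : insert j {i, k} = ({i, j, k} : Finset α) := by grind
  have hM₂ : insert k {i, j} = ({i, j, k} : Finset α) := by grind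
  simp only [pcd_singleton, hM₁, hM₂, insert_empty] at hk hki hikj hijk hsub
  rw [TripleInequality]
  linarith

/-- The candidate for the value of a profile at `M \ {i}`. -/
def coatomValue (M : Finset α) (D : Finset α → α → ℝ) (T : ℝ) (i : α) : ℝ :=
  T - D (M.erase i) i

/-- The bound on the value at `{i}` of a profile with the given coatom values: the minimum of
`U {i}` and the bound imposed by submodularity between `{i}` and `M`. -/
def atomBound (M : Finset α) (U : Finset α → ℝ) (D : Finset α → α → ℝ) (T : ℝ) (i : α) : ℝ :=
  min (U {i}) (∑ j ∈ M.erase i, coatomValue M D T j - T)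

/-- The candidate for the value of a profile at `{i}`. The second bound is forced by
`h {i} - D ∅ i ≤ h ∅ ≤ h {j} + h {k} - h {j, k}`. -/
def atomValue (M : Finset α) (U : Finset α → ℝ) (D : Finset α → α → ℝ) (T : ℝ) (i : α) : ℝ :=
  min (atomBound M U D T i)
    (∑ j ∈ M.erase i, atomBound M U D T j - (coatomValue M D T i - D ∅ i))

/-- The candidate for the value of a profile at `∅`: the least one from which every atom value is
within reach. -/
def bottomValue (M : Finset α) (U : Finset α → ℝ) (D : Finset α → α → ℝ) (T : ℝ) : ℝ :=
  ⨆ i : M, (atomValue M U D T i - D ∅ i)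

/-- The candidate for a profile on a three-point set `M`. -/
def threePointProfile (M : Finset α) (U : Finset α → ℝ) (D : Finset α → α → ℝ) (T : ℝ)
    (A : Finset α) : ℝ :=
  match #A with
  | 0 => bottomValue M U D T
  | 1 => ∑ i ∈ A, atomValue M U D T i
  | 2 => ∑ i ∈ M \ A, coatomValue M D T i
  | _ => T

theorem IsTriple.coatomValue_eq (t : IsTriple M i j k) : coatomValue M D T k = T - D {i, j} k := by
  rw [coatomValue, t.rotate.rotate.erase_eq]

theorem IsTriple.atomBound_eq (t : IsTriple M i j k) :
    atomBound M U D T i = min (U {i}) (coatomValue M D T j + coatomValue M D T k - T) := by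
  rw [atomBound, t.sum_erase]

theorem IsTriple.atomValue_eq (t : IsTriple M i j k) :
    atomValue M U D T i = min (atomBound M U D T i)
      (atomBound M U D T j + atomBound M U D T k - (coatomValue M D T i - D ∅ i)) := by
  rw [atomValue, t.sum_erase]

theorem IsTriple.top_add_atomValue_le (t : IsTriple M i j k) :
    T + atomValue M U D T i ≤ coatomValue M D T j + coatomValue M D T k := by
  have h : atomValue M U D T i ≤ atomBound M U D T i := min_le_left ..
  rw [t.atomBound_eq] at h
  linarith [h.trans (min_le_right ..)]

theorem atomValue_le_upper (i : α) : atomValue M U D T i ≤ U {i} :=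
  (min_le_left ..).trans (min_le_left ..)

theorem atomValue_sub_le_bottomValue (hi : i ∈ M) :
    atomValue M U D T i - D ∅ i ≤ bottomValue M U D T :=
  le_ciSup (f := fun l : M ↦ atomValue M U D T l - D ∅ l) (Set.finite_range _).bddAbove ⟨i, hi⟩

theorem threePointProfile_empty : threePointProfile M U D T ∅ = bottomValue M U D T := rfl

theorem threePointProfile_singleton (i : α) :
    threePointProfile M U D T {i} = atomValue M U D T i := by
  simp only [threePointProfile, card_singleton, sum_singleton]

theorem IsTriple.threePointProfile_pair (t : IsTriple M i j k) :
    threePointProfile M U D T {i, j} = coatomValue M D T k := by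
  have hk : M \ {i, j} = {k} := by grind [t.eq, t.ne₁₃, t.ne₂₃]
  simp only [threePointProfile, card_pair t.ne₁₂, hk, sum_singleton]

theorem threePointProfile_self (hM : #M = 3) : threePointProfile M U D T M = T := by
  simp only [threePointProfile, hM]

theorem min_sub_add_le_min_sub_add_min_sub {u v w a b c : ℝ} (hab : a + b ≤ 2 * w)
    (hac : a + c ≤ 2 * v) (hbc : b + c ≤ 2 * u) :
    min u (v + w - a) + a ≤ min v (u + w - b) + min w (u + v - c) := by
  grind

namespace IsBoundSystem

theorem incr_singleton_le (hB : IsBoundSystem M U D T) (t : IsTriple M i j k) :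
    D {i} j ≤ D ∅ j :=
  hB.incr_anti ∅ {i} (empty_subset _) (by grind [t.eq]) j t.rotate.left_mem

theorem sub_coatomValue_le (hB : IsBoundSystem M U D T) (t : IsTriple M i j k) :
    T - coatomValue M D T k ≤ D {i} k := by
  rw [t.coatomValue_eq, sub_sub_cancel]
  exact hB.incr_anti {i} {i, j} (by grind) t.pair_subset k t.right_mem

theorem coatomValue_le_top (hB : IsBoundSystem M U D T) (t : IsTriple M i j k) :
    coatomValue M D T i ≤ T :=
  sub_le_self T (hB.incr_nonneg _ (erase_subset i M) i t.left_mem)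

theorem coatomValue_le_upper (hB : IsBoundSystem M U D T) (t : IsTriple M i j k) :
    coatomValue M D T k ≤ U {i, j} := by
  have h := hB.upper_insert_le {i, j} t.pair_subset k t.right_mem
  rw [show insert k {i, j} = M by grind [t.eq]] at h
  rw [t.coatomValue_eq]
  linarith [hB.top_le]

theorem coatomValue_le_upper_singleton_add (hB : IsBoundSystem M U D T) (t : IsTriple M i j k) :
    coatomValue M D T k ≤ U {i} + D {i} j := by
  have h := hB.upper_insert_le {i} (by grind [t.eq]) j t.rotate.left_mem
  rw [pair_comm] at h
  exact (hB.coatomValue_le_upper t).trans h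

theorem two_mul_top_le (hB : IsBoundSystem M U D T) (t : IsTriple M i j k) :
    2 * T ≤ U {i} + U {j} + (D ∅ i + D {i} k) + D {i, k} j + D {i, j} k := by
  have hi := hB.coatomValue_le_upper_singleton_add t.swap_right
  have hj := hB.coatomValue_le_upper_singleton_add t.swap
  rw [t.swap_right.coatomValue_eq] at hi
  rw [t.coatomValue_eq] at hj
  linarith [hB.incr_singleton_le t.swap]

theorem coatomValue_sub_le_atomBound (hB : IsBoundSystem M U D T) (t : IsTriple M i j k) :
    coatomValue M D T k - D {i} j ≤ atomBound M U D T i := by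
  rw [t.atomBound_eq, le_min_iff]
  constructor <;>
    linarith [hB.coatomValue_le_upper_singleton_add t, hB.sub_coatomValue_le t.swap_right]

theorem coatomValue_sub_add_coatomValue_sub_le (hB : IsBoundSystem M U D T) (t : IsTriple M i j k)
    (h : TripleInequality U D T k j i) :
    coatomValue M D T i - D ∅ i + (coatomValue M D T j - D {i} k) ≤
      atomBound M U D T j + atomBound M U D T k := by
  have hi := t.rotate.coatomValue_eq (D := D) (T := T)
  have hj := t.swap_right.coatomValue_eq (D := D) (T := T)
  rw [TripleInequality, pair_comm k i, pair_comm k j] at h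
  rw [t.rotate.atomBound_eq, t.rotate.rotate.atomBound_eq, ← min_add_add_right,
    ← min_add_add_left, ← min_add_add_left]
  simp only [le_min_iff]
  have hUj := hB.coatomValue_le_upper_singleton_add t.swap
  have hUk := hB.coatomValue_le_upper_singleton_add t.rotate.rotate
  have hTi := hB.sub_coatomValue_le t.rotate
  have hTk := hB.sub_coatomValue_le t
  have hDj := hB.incr_singleton_le t.swap
  have hDk := hB.incr_singleton_le t.rotate.rotate
  refine ⟨⟨?_, ?_⟩, ?_, ?_⟩ <;> linarith

theorem coatomValue_sub_add_coatomValue_sub_le_two_mul (hB : IsBoundSystem M U D T)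
    (t : IsTriple M i j k) :
    coatomValue M D T i - D ∅ i + (coatomValue M D T j - D ∅ j) ≤ 2 * atomBound M U D T k := by
  have hUi := hB.coatomValue_le_upper_singleton_add t.rotate.rotate.swap_right
  have hUj := hB.coatomValue_le_upper_singleton_add t.rotate.rotate
  have hTi := hB.sub_coatomValue_le t.rotate
  have hTj := hB.sub_coatomValue_le t.swap_right
  have hDi := hB.incr_singleton_le t.rotate.rotate
  have hDj := hB.incr_singleton_le t.rotate.rotate.swap_right
  have hDi' := hB.incr_singleton_le t.swap
  have hDj' := hB.incr_singleton_le t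
  suffices (coatomValue M D T i - D ∅ i + (coatomValue M D T j - D ∅ j)) / 2 ≤
      atomBound M U D T k by linarith
  rw [t.rotate.rotate.atomBound_eq, le_min_iff]
  constructor <;> linarith

theorem atomValue_add_le (hB : IsBoundSystem M U D T) (t : IsTriple M i j k) :
    atomValue M U D T i + (coatomValue M D T i - D ∅ i) ≤
      atomValue M U D T j + atomValue M U D T k := by
  rw [t.atomValue_eq, t.swap.atomValue_eq, t.rotate.rotate.atomValue_eq]
  exact min_sub_add_le_min_sub_add_min_sub (hB.coatomValue_sub_add_coatomValue_sub_le_two_mul t)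
    (hB.coatomValue_sub_add_coatomValue_sub_le_two_mul t.swap_right)
    (hB.coatomValue_sub_add_coatomValue_sub_le_two_mul t.rotate)

theorem coatomValue_sub_le_atomValue (hB : IsBoundSystem M U D T) (t : IsTriple M i j k)
    (h : TripleInequality U D T j k i) :
    coatomValue M D T k - D {i} j ≤ atomValue M U D T i := by
  rw [t.atomValue_eq, le_min_iff]
  refine ⟨hB.coatomValue_sub_le_atomBound t, ?_⟩
  linarith [hB.coatomValue_sub_add_coatomValue_sub_le t.swap_right h]

theorem bottomValue_le_upper (hB : IsBoundSystem M U D T) (t : IsTriple M i j k) :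
    bottomValue M U D T ≤ U ∅ := by
  have : Nonempty M := ⟨i, t.left_mem⟩
  refine ciSup_le fun ⟨l, hl⟩ ↦ ?_
  have hU := hB.upper_insert_le ∅ (empty_subset M) l hl
  rw [insert_empty] at hU
  exact sub_le_iff_le_add.mpr ((atomValue_le_upper l).trans hU)

theorem bottomValue_add_le (hB : IsBoundSystem M U D T) (t : IsTriple M i j k)
    (hi : TripleInequality U D T j k i) (hj : TripleInequality U D T i k j) :
    bottomValue M U D T + coatomValue M D T k ≤ atomValue M U D T i + atomValue M U D T j := by
  have : Nonempty M := ⟨i, t.left_mem⟩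
  rw [← le_sub_iff_add_le]
  refine ciSup_le fun ⟨l, hl⟩ ↦ ?_
  obtain rfl | rfl | rfl : l = i ∨ l = j ∨ l = k := by grind [t.eq]
  · linarith [hB.coatomValue_sub_le_atomValue t.swap hj, hB.incr_singleton_le t.swap]
  · linarith [hB.coatomValue_sub_le_atomValue t hi, hB.incr_singleton_le t]
  · linarith [hB.atomValue_add_le t.rotate.rotate]

theorem isAmalgamProfile_threePointProfile (hB : IsBoundSystem M U D T) (hM : #M = 3)
    (h : ∀ i j k, IsTriple M i j k → TripleInequality U D T i j k) :
    IsAmalgamProfile M U D T (threePointProfile M U D T) where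
  le_upper A hA := by
    obtain rfl | ⟨i, hi, hiA⟩ : A = M ∨ ∃ i ∈ M, i ∉ A := by grind
    · exact (threePointProfile_self hM).trans_le hB.top_le
    obtain ⟨j, k, t, rfl | rfl | rfl⟩ := exists_isTriple_of_notMem hM hA hi hiA
    · exact threePointProfile_empty.trans_le (hB.bottomValue_le_upper t)
    · exact (threePointProfile_singleton j).trans_le (atomValue_le_upper j)
    · exact t.rotate.threePointProfile_pair.trans_le (hB.coatomValue_le_upper t.rotate)
  pcd_le A hA i hi hiA := by
    obtain ⟨j, k, t, rfl | rfl | rfl⟩ := exists_isTriple_of_notMem hM hA hi hiA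
    · rw [pcd_singleton, insert_empty, threePointProfile_empty, threePointProfile_singleton]
      linarith [atomValue_sub_le_bottomValue (U := U) (D := D) (T := T) hi]
    · rw [pcd_singleton, t.threePointProfile_pair, threePointProfile_singleton]
      linarith [hB.coatomValue_sub_le_atomValue t.swap (h _ _ _ t.swap.rotate)]
    · rw [pcd_singleton, t.eq, threePointProfile_self hM, t.rotate.threePointProfile_pair,
        t.rotate.coatomValue_eq, sub_sub_cancel]
  pcd_anti A hA i hi j hj hiA hjA hij := by
    obtain ⟨k, t, rfl | rfl⟩ := exists_isTriple_of_notMem_of_notMem hM hA hi hj hiA hjA hij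
    · rw [pcd_singleton, pcd_singleton, insert_empty, insert_empty, t.threePointProfile_pair,
        threePointProfile_empty, threePointProfile_singleton, threePointProfile_singleton]
      linarith [hB.bottomValue_add_le t (h _ _ _ t.rotate) (h _ _ _ t.swap_right)]
    · rw [pcd_singleton, pcd_singleton, t.eq, threePointProfile_self hM,
        t.rotate.threePointProfile_pair, t.swap_right.threePointProfile_pair,
        threePointProfile_singleton]
      linarith [t.rotate.rotate.top_add_atomValue_le (U := U) (D := D) (T := T)]
  le_top := (threePointProfile_self hM).ge
  erase_le_top i hi := by
    obtain ⟨j, k, t⟩ := exists_isTriple hM hi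
    rw [t.erase_eq, t.rotate.threePointProfile_pair, threePointProfile_self hM]
    exact hB.coatomValue_le_top t

theorem exists_isAmalgamProfile_iff (hB : IsBoundSystem M U D T) (hM : #M = 3) :
    (∃ h, IsAmalgamProfile M U D T h) ↔
      ∀ i j k, IsTriple M i j k → TripleInequality U D T i j k :=
  ⟨fun ⟨_, hh⟩ _ _ _ t ↦ hh.tripleInequality t,
    fun h ↦ ⟨_, hB.isAmalgamProfile_threePointProfile hM h⟩⟩

end IsBoundSystem

end ThreePoints

section PaperInequality

variable {M : Finset α} {x y a b c : α} {fx fy : Finset α → ℝ}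

theorem forall_bool_two_mul_ite_le_iff {p p' q q' r r' R : ℝ} :
    (∀ s₁ s₂ s₃ : Bool,
      2 * (if s₃ then p' else p) ≤ R + (if s₁ then q' else q) + (if s₂ then r' else r)) ↔
      2 * max p p' ≤ R + min q q' + min r r' := by
  have two_nonneg : (0 : ℝ) ≤ 2 := zero_le_two
  simp only [Bool.forall_bool, mul_max_of_nonneg _ _ two_nonneg, ← min_add_add_left,
    ← min_add_add_right, max_le_iff, le_min_iff, if_true, Bool.false_eq_true, if_false]
  tauto

theorem pmi_jointBound (I J A : Finset α) :
    pmi (jointBound fx fy x y) I J A =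
      pmi fx I J (insert x A) + pmi fy I J (insert y A) - pmi fx I J A := by
  simp only [pmi, jointBound, union_insert]
  ring

theorem pmi_left_eq (fx fy : Finset α → ℝ) (x y i : α) (A : Finset α) :
    pmi fx {i} {x} A = jointBound fx fy x y A - jointBound fx fy x y (insert i A) +
      pcd fy {i} (insert y A) := by
  simp only [pmi, pcd_singleton, jointBound, singleton_union, insert_union, insert_comm i]
  ring

namespace IsExtensionPair

theorem jointBound_comm (hf : IsExtensionPair M x y fx fy) {A : Finset α} (hA : A ⊆ M) :
    jointBound fy fx y x A = jointBound fx fy x y A := by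
  rw [jointBound, jointBound, hf.agree A hA, add_comm]

theorem pmi_right_eq (hf : IsExtensionPair M x y fx fy) {i : α} {A : Finset α} (hi : i ∈ M)
    (hA : A ⊆ M) :
    pmi fy {i} {y} A = jointBound fx fy x y A - jointBound fx fy x y (insert i A) +
      pcd fx {i} (insert x A) := by
  rw [pmi_left_eq fy fx y x, hf.jointBound_comm hA, hf.jointBound_comm (insert_subset hi hA)]

theorem pmi_le_amLHS_iff (hf : IsExtensionPair M x y fx fy) (t : IsTriple M a b c)
    (s₁ s₂ s₃ : Bool) :
    pmi fx {a} {b} ∅ ≤ amLHS fx fy x y a b c s₁ s₂ s₃ ↔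
      2 * (if s₃ then fy (insert y M) else fx (insert x M)) ≤
        jointBound fx fy x y {a} + jointBound fx fy x y {b} +
          (pcd fx {c} {x} + pcd fy {a} {y, c}) +
          (if s₁ then pcd fy {b} {y, a, c} else pcd fx {b} {x, a, c}) +
          (if s₂ then pcd fy {c} {y, a, b} else pcd fx {c} {x, a, b}) := by
  have hU := pmi_jointBound (x := x) (y := y) (fx := fx) (fy := fy) {a} {b} ∅
  have hac := pmi_left_eq fx fy x y a {c}
  have hc := hf.pmi_right_eq (i := c) (A := ∅) t.right_mem (empty_subset M)
  have hbx := pmi_left_eq fx fy x y b {a, c}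
  have hcx := pmi_left_eq fx fy x y c {a, b}
  have hby := hf.pmi_right_eq t.rotate.left_mem t.swap_right.pair_subset
  have hcy := hf.pmi_right_eq t.right_mem t.pair_subset
  have hbM : insert b {a, c} = M := by grind [t.eq]
  have hcM : insert c {a, b} = M := by grind [t.eq]
  have hx : pcd fx {x} M = jointBound fx fy x y M - fy (insert y M) := by
    rw [pcd_singleton, jointBound]
    ring
  have hy : pcd fy {y} M = jointBound fx fy x y M - fx (insert x M) := by
    rw [pcd_singleton, jointBound, hf.agree M Subset.rfl]
    ring
  have hU' : pmi (jointBound fx fy x y) {a} {b} ∅ = jointBound fx fy x y {a} +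
      jointBound fx fy x y {b} - jointBound fx fy x y {a, b} - jointBound fx fy x y ∅ := by
    simp only [pmi, union_empty, singleton_union]
  rw [hbM] at hbx hby
  rw [hcM] at hcx hcy
  simp only [insert_empty] at hU hc
  rw [amLHS, t.eq, hbx, hby, hcx, hcy, hx, hy, hac, hc]
  split_ifs <;> constructor <;> intro <;> linarith

theorem forall_pmi_le_amLHS_iff (hf : IsExtensionPair M x y fx fy) (t : IsTriple M a b c) :
    (∀ s₁ s₂ s₃ : Bool, pmi fx {a} {b} ∅ ≤ amLHS fx fy x y a b c s₁ s₂ s₃) ↔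
      2 * topBound fx fy x y M ≤ jointBound fx fy x y {a} + jointBound fx fy x y {b} +
        (pcd fx {c} {x} + pcd fy {a} {y, c}) +
        incrBound fx fy x y {a, c} b + incrBound fx fy x y {a, b} c := by
  simp only [hf.pmi_le_amLHS_iff t, forall_bool_two_mul_ite_le_iff]
  rfl

theorem two_mul_topBound_le (hf : IsExtensionPair M x y fx fy) (t : IsTriple M a b c) :
    2 * topBound fx fy x y M ≤ jointBound fx fy x y {a} + jointBound fx fy x y {b} +
      (pcd fx {c} {x} + pcd fx {a} {x, c}) +
      incrBound fx fy x y {a, c} b + incrBound fx fy x y {a, b} c := by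
  have ha : incrBound fx fy x y ∅ a ≤ pcd fx {a} {x} := min_le_left ..
  have hc : incrBound fx fy x y {a} c ≤ pcd fx {c} {x, a} := min_le_left ..
  have hac := pcd_add_pcd_insert_comm fx a c {x}
  rw [pair_comm a, pair_comm c] at hac
  linarith [hf.isBoundSystem.two_mul_top_le t]

theorem tripleInequality_iff (hf : IsExtensionPair M x y fx fy) (t : IsTriple M a b c) :
    TripleInequality (jointBound fx fy x y) (incrBound fx fy x y) (topBound fx fy x y M) a b c ↔
      ∀ s₁ s₂ s₃ : Bool, pmi fx {a} {b} ∅ ≤ amLHS fx fy x y a b c s₁ s₂ s₃ ∧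
        pmi fy {a} {b} ∅ ≤ amLHS fy fx y x a b c s₁ s₂ s₃ := by
  have hx := hf.two_mul_topBound_le t
  have hy := hf.symm.two_mul_topBound_le t
  simp only [forall_and, hf.forall_pmi_le_amLHS_iff t, hf.symm.forall_pmi_le_amLHS_iff t]
  have hD (A : Finset α) (i : α) : incrBound fy fx y x A i = incrBound fx fy x y A i :=
    min_comm ..
  have hT : topBound fy fx y x M = topBound fx fy x y M := max_comm ..
  have ha := hf.jointBound_comm (A := {a}) (by grind [t.eq])
  have hb := hf.jointBound_comm (A := {b}) (by grind [t.eq])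
  simp only [hD, hT, ha, hb] at hy ⊢
  have hc₀ : incrBound fx fy x y ∅ c = min (pcd fx {c} {x}) (pcd fy {c} {y}) := rfl
  have hca : incrBound fx fy x y {c} a = min (pcd fx {a} {x, c}) (pcd fy {a} {y, c}) := rfl
  rw [TripleInequality, hc₀, hca]
  -- Of the four ways to resolve the two minima, the mixed ones are the inequalities for the two
  -- orders of `x` and `y`, and the other two always hold by `hx` and `hy`.
  grind

end IsExtensionPair

end PaperInequality

/-- `f_x` and `f_y` have an amalgam iff inequality (1) holds for
all permutations of `a,b,c`, both orders of `(x,f_x)` and `(y,f_y)`, and all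
eight choices of the braced alternatives. -/
theorem statement_10 (a b c x y : α) (hnd : ([a, b, c, x, y] : List α).Nodup)
    (f fx fy : Finset α → ℝ)
    (hf : IsPolymatroid {a, b, c} f)
    (hfx : IsPolymatroid {a, b, c, x} fx) (hfy : IsPolymatroid {a, b, c, y} fy)
    (hresx : ∀ A ⊆ ({a, b, c} : Finset α), fx A = f A)
    (hresy : ∀ A ⊆ ({a, b, c} : Finset α), fy A = f A) :
    HaveAmalgam {a, b, c} {x} {y} fx fy ↔
      ∀ a' b' c' : α, ({a', b', c'} : Finset α) = {a, b, c} →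
        ∀ s1 s2 s3 : Bool,
          pmi f {a'} {b'} ∅ ≤ amLHS fx fy x y a' b' c' s1 s2 s3 ∧
          pmi f {a'} {b'} ∅ ≤ amLHS fy fx y x a' b' c' s1 s2 s3 := by
  have hM : #{a, b, c} = 3 := by grind
  have hx : ({a, b, c, x} : Finset α) = insert x {a, b, c} := by grind
  have hy : ({a, b, c, y} : Finset α) = insert y {a, b, c} := by grind
  have hpair : IsExtensionPair {a, b, c} x y fx fy :=
    ⟨hx ▸ hfx, hy ▸ hfy, fun A hA ↦ (hresx A hA).trans (hresy A hA).symm, by grind, by grind,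
      by grind⟩
  rw [hpair.haveAmalgam_iff_exists_isAmalgamProfile,
    hpair.isBoundSystem.exists_isAmalgamProfile_iff hM]
  simp only [← isTriple_iff_of_card_eq_three hM]
  refine forall₃_congr fun i j k ↦ forall_congr' fun t ↦ ?_
  have hpmi {g : Finset α → ℝ} (hg : ∀ A ⊆ {a, b, c}, g A = f A) :
      pmi g {i} {j} ∅ = pmi f {i} {j} ∅ :=
    pmi_congr fun A hA ↦ hg A (hA.trans (by grind [t.eq]))
  rw [hpair.tripleInequality_iff t, hpmi hresx, hpmi hresy]
end
end

section
/- Let ξ_a, ξ_b, ξ_c, ξ_x, ξ_y be jointly distributed random variables each taking finitely many values. Then for each of the four choices in the two braced alternatives, the following Shannon entropy inequality holds: (a,x|c) + (a,b|x) + (a,b|y) + (c,y) + {(b,x|ac) or (b,y|ac)} + {(c,x|ab) or (c,y|ab)} ≥ (a,b). -/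
open Finset

noncomputable section

open scoped Classical

/-- Shannon entropy of the (finitely valued) random variable `g` on the finite
probability space `(Ω, p)`: `H(g) = −∑_v P[g = v]·log P[g = v]`, written as
`−∑_ω p(ω)·log P[g = g(ω)]`. -/
def entH {Ω β : Type*} [Fintype Ω] (p : Ω → ℝ) (g : Ω → β) : ℝ :=
  -∑ ω : Ω, p ω * Real.log (∑ ω' ∈ Finset.univ.filter (fun ω' => g ω' = g ω), p ω')

/-- Entropy of the joint marginal `ξ_A = (ξ_i : i ∈ A)`. -/
def margH {Ω S : Type*} [Fintype Ω] (p : Ω → ℝ) (ξ : Fin 5 → Ω → S)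
    (A : Finset (Fin 5)) : ℝ :=
  entH p (fun ω i => if i ∈ A then some (ξ i ω) else none)

/-- `(I,J|K) = H(ξ_{I∪K}) + H(ξ_{J∪K}) − H(ξ_{I∪J∪K}) − H(ξ_K)`. -/
def miH {Ω S : Type*} [Fintype Ω] (p : Ω → ℝ) (ξ : Fin 5 → Ω → S)
    (I J K : Finset (Fin 5)) : ℝ :=
  margH p ξ (I ∪ K) + margH p ξ (J ∪ K) - margH p ξ (I ∪ J ∪ K) - margH p ξ K

/-!
No term of the inequality involves `x` and `y` jointly, so only the laws of `(a,b,c,x)` and of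
`(a,b,c,y)` matter, and one may replace the joint law by their conditionally independent coupling
over `(a,b,c)`, for which `(x,y|abc) = 0`. Then `(x,y|ac)` is at most both `(b,x|ac)` and
`(b,y|ac)`, while `(x,y|ab)` is at most both `(c,x|ab)` and `(c,y|ab)`. It remains to add
`(x,y) ≤ (c,y) + (x,y|c)`, `(x,y|c) ≤ (a,x|c) + (x,y|ac)` and
`(a,b) ≤ (a,b|x) + (a,b|y) + (x,y) + (x,y|ab)`.

The nonnegativity of `(r,s|t)` comes from the same construction: it is Gibbs' inequality for the
diagonal coupling against the conditionally independent coupling over `t`.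
-/

section

variable {Ω : Type*} {r z : Setoid Ω}

/-- The pairs of points lying in a common block of `z`. On this space a partition coarser than `z`
has the same pullback along both projections. -/
abbrev FibreSquare (z : Setoid Ω) : Type _ :=
  {ω : Ω × Ω // z ω.1 ω.2}

namespace FibreSquare

/-- The first projection. -/
def fst (ω : FibreSquare z) : Ω := ω.1.1

/-- The second projection. -/
def snd (ω : FibreSquare z) : Ω := ω.1.2

lemma comap_fst_eq_comap_snd (h : z ≤ r) :
    r.comap (fst : FibreSquare z → Ω) = r.comap snd := by
  ext ω ω'
  have hω : r ω.fst ω.snd := h ω.2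
  have hω' : r ω'.fst ω'.snd := h ω'.2
  exact ⟨fun k ↦ r.trans (r.symm hω) (r.trans k hω'), fun k ↦ r.trans hω (r.trans k (r.symm hω'))⟩

end FibreSquare

end

section Partition

variable {Ω Θ : Type*} [Fintype Ω] [Fintype Θ]

/-- The total weight under `p` of the block of the partition `r` containing `ω`. -/
def blockWeight (p : Ω → ℝ) (r : Setoid Ω) (ω : Ω) : ℝ :=
  ∑ i with r ω i, p i

/-- Shannon entropy of the partition `r` under the weight `p`. A random variable is encoded by its
kernel `Setoid.ker`, so that `r ⊓ s` stands for a joint variable and `⊤` for a constant. The weight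
need not be normalized. -/
def partitionEntropy (p : Ω → ℝ) (r : Setoid Ω) : ℝ :=
  -∑ ω, p ω * Real.log (blockWeight p r ω)

/-- The conditional mutual information `(r,s|t)` of partitions. The unconditional `(r,s)` is the
case `t = ⊤`, whose entropy is `-M log M` for a weight of total mass `M`. -/
def condMutualInfo (p : Ω → ℝ) (r s t : Setoid Ω) : ℝ :=
  partitionEntropy p (r ⊓ t) + partitionEntropy p (s ⊓ t) - partitionEntropy p (r ⊓ s ⊓ t) -
    partitionEntropy p t

variable {p : Ω → ℝ} {q : Θ → ℝ} {r s t z : Setoid Ω}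

lemma blockWeight_congr (p : Ω → ℝ) {i j : Ω} (h : r i j) :
    blockWeight p r i = blockWeight p r j := by
  have hiff (k : Ω) : r i k ↔ r j k := ⟨r.trans (r.symm h), r.trans h⟩
  simp only [blockWeight, hiff]

lemma blockWeight_nonneg (hp : ∀ ω, 0 ≤ p ω) (r : Setoid Ω) (ω : Ω) : 0 ≤ blockWeight p r ω :=
  sum_nonneg fun ω' _ ↦ hp ω'

lemma blockWeight_pos (hp : ∀ ω, 0 ≤ p ω) (r : Setoid Ω) {ω : Ω} (hω : 0 < p ω) :
    0 < blockWeight p r ω :=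
  hω.trans_le <| single_le_sum (fun ω' _ ↦ hp ω') (by simp)

lemma mul_blockWeight_div_self (hp : ∀ ω, 0 ≤ p ω) (r : Setoid Ω) (ω : Ω) :
    p ω * (blockWeight p r ω / blockWeight p r ω) = p ω := by
  rcases (hp ω).eq_or_lt with h | h
  · simp [← h]
  · rw [div_self (blockWeight_pos hp r h).ne', mul_one]

lemma sum_div_blockWeight_le_one (p : Ω → ℝ) (r : Setoid Ω) (ω : Ω) :
    ∑ ω' with r ω ω', p ω' / blockWeight p r ω' ≤ 1 :=
  calc ∑ ω' with r ω ω', p ω' / blockWeight p r ω'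
      = ∑ ω' with r ω ω', p ω' / blockWeight p r ω :=
        sum_congr rfl fun ω' h ↦ by rw [blockWeight_congr p (mem_filter.1 h).2]
    _ = blockWeight p r ω / blockWeight p r ω := by rw [← sum_div, blockWeight]
    _ ≤ 1 := div_self_le_one _

/-- The map `φ` pushes the weight `q` forward to `p`, expressed as a change of variables so that it
applies directly to the sums defining block weights and entropies. -/
def WeightPreserving (q : Θ → ℝ) (p : Ω → ℝ) (φ : Θ → Ω) : Prop :=
  ∀ F : Ω → ℝ, ∑ ω', q ω' * F (φ ω') = ∑ ω, p ω * F ω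

namespace WeightPreserving

variable {φ : Θ → Ω}

lemma blockWeight_comap (hφ : WeightPreserving q p φ) (r : Setoid Ω) (ω' : Θ) :
    blockWeight q (r.comap φ) ω' = blockWeight p r (φ ω') := by
  simpa only [blockWeight, sum_filter, Setoid.comap_rel, mul_ite, mul_one, mul_zero] using
    hφ fun ω ↦ if r (φ ω') ω then 1 else 0

lemma partitionEntropy_comap (hφ : WeightPreserving q p φ) (r : Setoid Ω) :
    partitionEntropy q (r.comap φ) = partitionEntropy p r := by
  simp only [partitionEntropy, hφ.blockWeight_comap, hφ fun ω ↦ Real.log (blockWeight p r ω)]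

lemma condMutualInfo_comap (hφ : WeightPreserving q p φ) (r s t : Setoid Ω) :
    condMutualInfo q (r.comap φ) (s.comap φ) (t.comap φ) = condMutualInfo p r s t := by
  have hcomap (u v : Setoid Ω) : u.comap φ ⊓ v.comap φ = (u ⊓ v).comap φ := rfl
  simp only [condMutualInfo, hcomap, hφ.partitionEntropy_comap]

end WeightPreserving

namespace FibreSquare

/-- The coupling of two copies of `p` that agree on `z` and are conditionally independent given
`z`. On a block of weight zero the division yields the intended value `0`. -/
def weight (p : Ω → ℝ) (z : Setoid Ω) (ω : FibreSquare z) : ℝ :=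
  p ω.fst * p ω.snd / blockWeight p z ω.fst

lemma sum_eq (z : Setoid Ω) (F : Ω → Ω → ℝ) :
    ∑ ω : FibreSquare z, F ω.fst ω.snd = ∑ i, ∑ j with z i j, F i j := by
  simp only [sum_filter, ← Fintype.sum_prod_type']
  rw [← sum_filter]
  exact (sum_subtype _ (by simp) fun ω : Ω × Ω ↦ F ω.1 ω.2).symm

lemma weight_nonneg (hp : ∀ ω, 0 ≤ p ω) (z : Setoid Ω) (ω : FibreSquare z) : 0 ≤ weight p z ω :=
  div_nonneg (mul_nonneg (hp _) (hp _)) (blockWeight_nonneg hp _ _)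

lemma weightPreserving_fst (hp : ∀ ω, 0 ≤ p ω) (z : Setoid Ω) :
    WeightPreserving (weight p z) p fst := fun F ↦
  calc ∑ ω : FibreSquare z, weight p z ω * F ω.fst
      = ∑ i, ∑ j with z i j, p i * p j / blockWeight p z i * F i :=
        sum_eq z fun i j ↦ p i * p j / blockWeight p z i * F i
    _ = ∑ i, p i * (blockWeight p z i / blockWeight p z i) * F i := by
        refine sum_congr rfl fun i _ ↦ ?_
        rw [← sum_mul, ← sum_div, ← mul_sum, mul_div_assoc, ← blockWeight]
    _ = ∑ i, p i * F i := by simp only [mul_blockWeight_div_self hp]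

lemma weightPreserving_snd (hp : ∀ ω, 0 ≤ p ω) (z : Setoid Ω) :
    WeightPreserving (weight p z) p snd := fun F ↦ by
  let swap : FibreSquare z ≃ FibreSquare z :=
    (Equiv.prodComm Ω Ω).subtypeEquiv fun _ ↦ z.comm'
  have hswap (ω : FibreSquare z) : weight p z (swap ω) = weight p z ω := by
    change p ω.snd * p ω.fst / blockWeight p z ω.snd = _
    rw [mul_comm, ← blockWeight_congr p (show z ω.fst ω.snd from ω.2), weight]
  calc ∑ ω, weight p z ω * F ω.snd
      = ∑ ω, weight p z ω * F ω.fst :=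
        Fintype.sum_equiv swap _ _ fun ω ↦ by rw [hswap]; rfl
    _ = ∑ i, p i * F i := weightPreserving_fst hp z F

lemma blockWeight_comap_inf_comap (p : Ω → ℝ) (hr : r ≤ z) (hs : s ≤ z) (ω : FibreSquare z) :
    blockWeight (weight p z) (r.comap fst ⊓ s.comap snd) ω =
      blockWeight p r ω.fst * blockWeight p s ω.snd / blockWeight p z ω.fst := by
  have hz {i j : Ω} (hi : r ω.fst i) (hj : s ω.snd j) : z i j :=
    z.trans (z.symm (hr hi)) (z.trans ω.2 (hs hj))
  calc blockWeight (weight p z) (r.comap fst ⊓ s.comap snd) ω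
      = ∑ i, ∑ j with z i j,
          if r ω.fst i ∧ s ω.snd j then p i * p j / blockWeight p z i else 0 := by
        rw [blockWeight, sum_filter, ← sum_eq z fun i j ↦
          if r ω.fst i ∧ s ω.snd j then p i * p j / blockWeight p z i else 0]
        exact sum_congr rfl fun _ _ ↦ if_congr Iff.rfl rfl rfl
    _ = ∑ i with r ω.fst i, ∑ j with s ω.snd j, p i * p j / blockWeight p z ω.fst := by
        simp only [sum_filter]
        refine sum_congr rfl fun i _ ↦ ?_
        by_cases hi : r ω.fst i
        · rw [if_pos hi, ← blockWeight_congr p (hr hi)]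
          refine sum_congr rfl fun j _ ↦ ?_
          by_cases hj : s ω.snd j <;> simp [hi, hj, hz]
        · simp [hi]
    _ = blockWeight p r ω.fst * blockWeight p s ω.snd / blockWeight p z ω.fst := by
        simp only [← sum_div, blockWeight, sum_mul_sum]

lemma partitionEntropy_comap_inf_comap (hp : ∀ ω, 0 ≤ p ω) (hr : r ≤ z) (hs : s ≤ z) :
    partitionEntropy (weight p z) (r.comap fst ⊓ s.comap snd) =
      partitionEntropy p r + partitionEntropy p s - partitionEntropy p z := by
  have hfst := weightPreserving_fst hp z
  have hsnd := weightPreserving_snd hp z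
  have hlog (ω : FibreSquare z) :
      weight p z ω * Real.log (blockWeight (weight p z) (r.comap fst ⊓ s.comap snd) ω) =
        weight p z ω * Real.log (blockWeight p r ω.fst) +
        weight p z ω * Real.log (blockWeight p s ω.snd) -
        weight p z ω * Real.log (blockWeight p z ω.fst) := by
    rcases (weight_nonneg hp z ω).eq_or_lt with h | h
    · simp [← h]
    have hpos {u : Setoid (FibreSquare z)} := blockWeight_pos (weight_nonneg hp z) u h
    have hr_pos := hfst.blockWeight_comap r ω ▸ hpos
    have hs_pos := hsnd.blockWeight_comap s ω ▸ hpos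
    have hz_pos := hfst.blockWeight_comap z ω ▸ hpos
    rw [blockWeight_comap_inf_comap p hr hs,
      Real.log_div (mul_pos hr_pos hs_pos).ne' hz_pos.ne', Real.log_mul hr_pos.ne' hs_pos.ne']
    ring
  rw [← hfst.partitionEntropy_comap r, ← hsnd.partitionEntropy_comap s,
    ← hfst.partitionEntropy_comap z]
  simp only [partitionEntropy, hlog, hfst.blockWeight_comap, hsnd.blockWeight_comap,
    sum_sub_distrib, sum_add_distrib]
  ring

lemma condMutualInfo_comap_fst_comap_snd (hp : ∀ ω, 0 ≤ p ω) (r s z : Setoid Ω) :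
    condMutualInfo (weight p z) (r.comap fst) (s.comap snd) (z.comap fst) = 0 := by
  have hfst := weightPreserving_fst hp z
  have hsnd := weightPreserving_snd hp z
  have hr : r.comap (fst : FibreSquare z → Ω) ⊓ z.comap fst = (r ⊓ z).comap fst := rfl
  have hs : s.comap (snd : FibreSquare z → Ω) ⊓ z.comap fst = (s ⊓ z).comap snd := by
    rw [comap_fst_eq_comap_snd le_rfl]
    rfl
  have hrs : r.comap (fst : FibreSquare z → Ω) ⊓ s.comap snd ⊓ z.comap fst =
      (r ⊓ z).comap fst ⊓ (s ⊓ z).comap snd := by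
    rw [inf_inf_distrib_right, hr, hs]
  rw [condMutualInfo, hr, hs, hrs, partitionEntropy_comap_inf_comap hp inf_le_right inf_le_right,
    hfst.partitionEntropy_comap, hsnd.partitionEntropy_comap, hfst.partitionEntropy_comap]
  ring

end FibreSquare

lemma sum_mul_log_nonpos {f : Ω → ℝ} (hp : ∀ ω, 0 ≤ p ω) (hf : ∀ ω, 0 < p ω → 0 < f ω)
    (h : ∑ ω, p ω * f ω ≤ ∑ ω, p ω) : ∑ ω, p ω * Real.log (f ω) ≤ 0 :=
  calc ∑ ω, p ω * Real.log (f ω) ≤ ∑ ω, p ω * (f ω - 1) := by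
        refine sum_le_sum fun ω _ ↦ ?_
        rcases (hp ω).eq_or_lt with hω | hω
        · simp [← hω]
        · exact mul_le_mul_of_nonneg_left (Real.log_le_sub_one_of_pos (hf ω hω)) hω.le
    _ = ∑ ω, p ω * f ω - ∑ ω, p ω := by simp only [mul_sub, mul_one, sum_sub_distrib]
    _ ≤ 0 := sub_nonpos.2 h

-- The ratio compares the weights given to a block of `r × s` by the coupling over `t` and by the
-- diagonal coupling.
lemma sum_mul_blockWeight_ratio_le (hp : ∀ ω, 0 ≤ p ω) (hr : r ≤ t) (hs : s ≤ t) :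
    ∑ ω, p ω * (blockWeight p r ω * blockWeight p s ω /
      (blockWeight p t ω * blockWeight p (r ⊓ s) ω)) ≤ ∑ ω, p ω := by
  let q := FibreSquare.weight p t
  let diag (ω : Ω) : FibreSquare t := ⟨(ω, ω), t.refl ω⟩
  have hblock (ω : FibreSquare t) :
      ∑ i with r i ω.fst ∧ s i ω.snd, p i / blockWeight p (r ⊓ s) i ≤ 1 := by
    by_cases h : ∃ k, r k ω.fst ∧ s k ω.snd
    · obtain ⟨k, hrk, hsk⟩ := h
      have hiff (i : Ω) : r i ω.fst ∧ s i ω.snd ↔ (r ⊓ s) k i :=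
        and_congr ⟨fun h ↦ r.trans hrk (r.symm h), fun h ↦ r.trans (r.symm h) hrk⟩
          ⟨fun h ↦ s.trans hsk (s.symm h), fun h ↦ s.trans (s.symm h) hsk⟩
      simpa only [hiff] using sum_div_blockWeight_le_one p (r ⊓ s) k
    · rw [filter_eq_empty_iff.2 fun i _ hi ↦ h ⟨i, hi⟩, sum_empty]
      exact zero_le_one
  calc ∑ ω, p ω * (blockWeight p r ω * blockWeight p s ω /
        (blockWeight p t ω * blockWeight p (r ⊓ s) ω))
      = ∑ i, p i / blockWeight p (r ⊓ s) i *
          blockWeight q (r.comap FibreSquare.fst ⊓ s.comap FibreSquare.snd) (diag i) := by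
        refine sum_congr rfl fun i _ ↦ ?_
        rw [FibreSquare.blockWeight_comap_inf_comap p hr hs]
        simp only [diag, FibreSquare.fst, FibreSquare.snd]
        ring
    _ = ∑ ω, q ω * ∑ i with r i ω.fst ∧ s i ω.snd, p i / blockWeight p (r ⊓ s) i := by
        simp only [blockWeight, mul_sum, sum_filter, mul_ite, mul_zero]
        rw [sum_comm]
        exact sum_congr rfl fun ω _ ↦ sum_congr rfl fun i _ ↦ if_congr Iff.rfl (mul_comm _ _) rfl
    _ ≤ ∑ ω, q ω * 1 := by gcongr with ω; exacts [FibreSquare.weight_nonneg hp t ω, hblock ω]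
    _ = ∑ ω, p ω := by simpa using FibreSquare.weightPreserving_fst hp t fun _ ↦ 1

lemma partitionEntropy_inf_add_le (hp : ∀ ω, 0 ≤ p ω) (hr : r ≤ t) (hs : s ≤ t) :
    partitionEntropy p (r ⊓ s) + partitionEntropy p t ≤
      partitionEntropy p r + partitionEntropy p s := by
  have hpos (u : Setoid Ω) {ω : Ω} (hω : 0 < p ω) := blockWeight_pos hp u hω
  have hgibbs := sum_mul_log_nonpos hp
    (fun ω hω ↦ div_pos (mul_pos (hpos r hω) (hpos s hω)) (mul_pos (hpos t hω) (hpos (r ⊓ s) hω)))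
    (sum_mul_blockWeight_ratio_le hp hr hs)
  have hlog (ω : Ω) : p ω * Real.log (blockWeight p r ω * blockWeight p s ω /
      (blockWeight p t ω * blockWeight p (r ⊓ s) ω)) =
      p ω * Real.log (blockWeight p r ω) + p ω * Real.log (blockWeight p s ω) -
        (p ω * Real.log (blockWeight p t ω) + p ω * Real.log (blockWeight p (r ⊓ s) ω)) := by
    rcases (hp ω).eq_or_lt with hω | hω
    · simp [← hω]
    have hne (u : Setoid Ω) := (hpos u hω).ne'
    rw [Real.log_div (mul_ne_zero (hne r) (hne s)) (mul_ne_zero (hne t) (hne (r ⊓ s))),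
      Real.log_mul (hne r) (hne s), Real.log_mul (hne t) (hne (r ⊓ s))]
    ring
  simp only [hlog, sum_sub_distrib, sum_add_distrib] at hgibbs
  simp only [partitionEntropy]
  linarith

lemma condMutualInfo_nonneg (hp : ∀ ω, 0 ≤ p ω) (r s t : Setoid Ω) :
    0 ≤ condMutualInfo p r s t := by
  have hsub := partitionEntropy_inf_add_le hp (inf_le_right : r ⊓ t ≤ t) (inf_le_right : s ⊓ t ≤ t)
  rw [← inf_inf_distrib_right] at hsub
  rw [condMutualInfo]
  linarith

lemma condMutualInfo_comm (p : Ω → ℝ) (r s t : Setoid Ω) :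
    condMutualInfo p r s t = condMutualInfo p s r t := by
  rw [condMutualInfo, condMutualInfo, inf_comm r s]
  ring

lemma condMutualInfo_inf_right (p : Ω → ℝ) (r s u t : Setoid Ω) :
    condMutualInfo p r (s ⊓ u) t = condMutualInfo p r s t + condMutualInfo p r u (s ⊓ t) := by
  simp only [condMutualInfo, inf_comm, inf_left_comm]
  ring

lemma condMutualInfo_le_add (hp : ∀ ω, 0 ≤ p ω) (r s u t : Setoid Ω) :
    condMutualInfo p r u t ≤ condMutualInfo p r s t + condMutualInfo p r u (s ⊓ t) := by
  have hchain := condMutualInfo_inf_right p r u s t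
  rw [inf_comm, condMutualInfo_inf_right] at hchain
  have hnonneg := condMutualInfo_nonneg hp r s (u ⊓ t)
  linarith

-- This alternating sum is the co-information of `a`, `b`, `x`, `y`.
lemma condMutualInfo_coinformation_symm (p : Ω → ℝ) (a b x y : Setoid Ω) :
    condMutualInfo p a b ⊤ - condMutualInfo p a b x - condMutualInfo p a b y +
        condMutualInfo p a b (x ⊓ y) =
      condMutualInfo p x y ⊤ - condMutualInfo p x y a - condMutualInfo p x y b +
        condMutualInfo p x y (a ⊓ b) := by
  simp only [condMutualInfo, inf_top_eq, inf_comm, inf_left_comm]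
  ring

lemma condMutualInfo_le_ingleton_add (hp : ∀ ω, 0 ≤ p ω) (a b x y : Setoid Ω) :
    condMutualInfo p a b ⊤ ≤
      condMutualInfo p a b x + condMutualInfo p a b y + condMutualInfo p x y ⊤ +
        condMutualInfo p x y (a ⊓ b) := by
  have hnonneg := condMutualInfo_nonneg hp
  linarith [condMutualInfo_coinformation_symm p a b x y, hnonneg a b (x ⊓ y), hnonneg x y a,
    hnonneg x y b]

lemma condMutualInfo_le_min_of_condIndep (hp : ∀ ω, 0 ≤ p ω) {r s u t : Setoid Ω}
    (h : condMutualInfo p r s (u ⊓ t) = 0) :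
    condMutualInfo p r s t ≤ min (condMutualInfo p u r t) (condMutualInfo p u s t) := by
  refine le_min ?_ ?_
  · have hle := condMutualInfo_le_add hp r u s t
    rwa [h, add_zero, condMutualInfo_comm p r u] at hle
  · have hle := condMutualInfo_le_add hp s u r t
    rwa [condMutualInfo_comm p s r, condMutualInfo_comm p s r, h, add_zero,
      condMutualInfo_comm p s u] at hle

lemma condMutualInfo_le_of_condIndep (hp : ∀ ω, 0 ≤ p ω) {a b c x y : Setoid Ω}
    (hxy : condMutualInfo p x y (a ⊓ b ⊓ c) = 0) :
    condMutualInfo p a b ⊤ ≤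
      condMutualInfo p a x c + condMutualInfo p a b x + condMutualInfo p a b y +
      condMutualInfo p c y ⊤ +
      min (condMutualInfo p b x (a ⊓ c)) (condMutualInfo p b y (a ⊓ c)) +
      min (condMutualInfo p c x (a ⊓ b)) (condMutualInfo p c y (a ⊓ b)) := by
  have hb : condMutualInfo p x y (a ⊓ c) ≤
      min (condMutualInfo p b x (a ⊓ c)) (condMutualInfo p b y (a ⊓ c)) := by
    rw [inf_right_comm, inf_comm] at hxy
    exact condMutualInfo_le_min_of_condIndep hp hxy
  have hc : condMutualInfo p x y (a ⊓ b) ≤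
      min (condMutualInfo p c x (a ⊓ b)) (condMutualInfo p c y (a ⊓ b)) := by
    rw [inf_comm] at hxy
    exact condMutualInfo_le_min_of_condIndep hp hxy
  have hxyc : condMutualInfo p x y c ≤ condMutualInfo p a x c + condMutualInfo p x y (a ⊓ c) := by
    rw [condMutualInfo_comm p a]
    exact condMutualInfo_le_add hp x a y c
  have hxy_top : condMutualInfo p x y ⊤ ≤ condMutualInfo p c y ⊤ + condMutualInfo p x y c := by
    have h := condMutualInfo_le_add hp y c x ⊤
    rwa [inf_top_eq, condMutualInfo_comm p y, condMutualInfo_comm p y,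
      condMutualInfo_comm p y] at h
  have hingleton := condMutualInfo_le_ingleton_add hp a b x y
  linarith

end Partition

lemma setoid_finset_inf_rel {ι Ω : Type*} (A : Finset ι) (r : ι → Setoid Ω) (ω ω' : Ω) :
    A.inf r ω ω' ↔ ∀ i ∈ A, r i ω ω' := by
  induction A using Finset.induction_on with
  | empty => exact iff_of_true trivial (by simp)
  | insert i A _ ih => rw [inf_insert, Setoid.inf_iff_and, ih, forall_mem_insert]

lemma margH_eq_partitionEntropy {Ω S : Type*} [Fintype Ω] (p : Ω → ℝ) (ξ : Fin 5 → Ω → S)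
    (A : Finset (Fin 5)) :
    margH p ξ A = partitionEntropy p (A.inf fun i ↦ Setoid.ker (ξ i)) := by
  have hker (ω ω' : Ω) : (A.inf fun i ↦ Setoid.ker (ξ i)) ω ω' ↔
      (fun i ↦ if i ∈ A then some (ξ i ω') else none) =
        fun i ↦ if i ∈ A then some (ξ i ω) else none := by
    rw [setoid_finset_inf_rel, funext_iff]
    refine forall_congr' fun i ↦ ?_
    by_cases hi : i ∈ A <;> simp [hi, Setoid.ker_def, eq_comm]
  simp only [margH, entH, partitionEntropy, blockWeight, hker]

lemma miH_eq_condMutualInfo {Ω S : Type*} [Fintype Ω] (p : Ω → ℝ) (ξ : Fin 5 → Ω → S)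
    (I J K : Finset (Fin 5)) :
    miH p ξ I J K = condMutualInfo p (I.inf fun i ↦ Setoid.ker (ξ i))
      (J.inf fun i ↦ Setoid.ker (ξ i)) (K.inf fun i ↦ Setoid.ker (ξ i)) := by
  simp only [miH, margH_eq_partitionEntropy, inf_union, condMutualInfo]

theorem statement_12_general {Ω : Type*} [Fintype Ω] {p : Ω → ℝ} (hp : ∀ ω, 0 ≤ p ω)
    (a b c x y : Setoid Ω) :
    condMutualInfo p a b ⊤ ≤
      condMutualInfo p a x c + condMutualInfo p a b x + condMutualInfo p a b y +
      condMutualInfo p c y ⊤ +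
      min (condMutualInfo p b x (a ⊓ c)) (condMutualInfo p b y (a ⊓ c)) +
      min (condMutualInfo p c x (a ⊓ b)) (condMutualInfo p c y (a ⊓ b)) := by
  let z := a ⊓ b ⊓ c
  have hfst := FibreSquare.weightPreserving_fst hp z
  have hsnd := FibreSquare.weightPreserving_snd hp z
  have ha : a.comap FibreSquare.fst = a.comap (FibreSquare.snd (z := z)) :=
    FibreSquare.comap_fst_eq_comap_snd (inf_le_left.trans inf_le_left)
  have hb : b.comap FibreSquare.fst = b.comap (FibreSquare.snd (z := z)) :=
    FibreSquare.comap_fst_eq_comap_snd (inf_le_left.trans inf_le_right)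
  have hc : c.comap FibreSquare.fst = c.comap (FibreSquare.snd (z := z)) :=
    FibreSquare.comap_fst_eq_comap_snd inf_le_right
  have hcomap_inf (r s : Setoid Ω) : (r ⊓ s).comap (FibreSquare.snd (z := z)) =
      r.comap FibreSquare.snd ⊓ s.comap FibreSquare.snd := rfl
  rw [← hfst.condMutualInfo_comap a b ⊤, ← hfst.condMutualInfo_comap a x c,
    ← hfst.condMutualInfo_comap a b x, ← hfst.condMutualInfo_comap b x,
    ← hfst.condMutualInfo_comap c x, ← hsnd.condMutualInfo_comap a b y,
    ← hsnd.condMutualInfo_comap c y ⊤, ← hsnd.condMutualInfo_comap b y,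
    ← hsnd.condMutualInfo_comap c y, hcomap_inf, hcomap_inf, ← ha, ← hb, ← hc]
  exact condMutualInfo_le_of_condIndep (FibreSquare.weight_nonneg hp z)
    (FibreSquare.condMutualInfo_comap_fst_comap_snd hp x y z)

/-- the five-variable non-Shannon entropy inequality
`(a,x|c)+(a,b|x)+(a,b|y)+(c,y)+{(b,x|ac) or (b,y|ac)}+{(c,x|ab) or (c,y|ab)} ≥ (a,b)`
for jointly distributed finitely-valued random variables `ξ_0 = ξ_a`,
`ξ_1 = ξ_b`, `ξ_2 = ξ_c`, `ξ_3 = ξ_x`, `ξ_4 = ξ_y`. -/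
theorem statement_12 {Ω S : Type*} [Fintype Ω] (p : Ω → ℝ)
    (hp0 : ∀ ω, 0 ≤ p ω) (hp1 : ∑ ω : Ω, p ω = 1)
    (ξ : Fin 5 → Ω → S) (s1 s2 : Bool) :
    miH p ξ {0} {1} ∅ ≤
      miH p ξ {0} {3} {2} + miH p ξ {0} {1} {3} + miH p ξ {0} {1} {4} +
      miH p ξ {2} {4} ∅ +
      (if s1 then miH p ξ {1} {3} {0, 2} else miH p ξ {1} {4} {0, 2}) +
      (if s2 then miH p ξ {2} {3} {0, 1} else miH p ξ {2} {4} {0, 1}) := by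
  have hgeneral := statement_12_general hp0 (Setoid.ker (ξ 0)) (Setoid.ker (ξ 1))
    (Setoid.ker (ξ 2)) (Setoid.ker (ξ 3)) (Setoid.ker (ξ 4))
  simp only [miH_eq_condMutualInfo, inf_insert, inf_singleton, inf_empty]
  refine hgeneral.trans ?_
  gcongr <;> split_ifs <;> simp
end
end
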